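/- Lower bound on the sensing rate: with X Bernoulli-Gaussian BG(μ_T, σ_T², γ) and Y = √s X + Z (Z ~ CN(0,1)), for any binary detector Ŷ = g(Y) with error probabilities P_FA, P_MD, I(X; Y) ≥ H_b(γ) - H_NP(γ, P_FA, P_MD) + γ log₂(1 + s σ_T²). -/

import Mathlib

open Real MeasureTheory

/-- Binary entropy function (in bits), with the convention `0 log 0 = 0`. -/
noncomputable def binEnt (p : ℝ) : ℝ := -(p * Real.logb 2 p) - (1 - p) * Real.logb 2 (1 - p)

/-- `H_NP(γ, P_FA, P_MD)`: the remaining target-location uncertainty after detection. -/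
noncomputable def HNP (γ pFA pMD : ℝ) : ℝ :=
  binEnt γ + (1 - γ) * binEnt pFA + γ * binEnt pMD
    - binEnt ((1 - γ) * pFA + γ * (1 - pMD))

/-!
Let `U ~ Bernoulli(γ)` select the Gaussian component from which `Y` is drawn. The chain rule
`I(U; Y) = h(Y) - h(Y | U)` holds for entropies relative to any reference measure. For the Lebesgue
measure on `ℂ`, where the two components have entropies `log (π e)` and `log (π e (1 + s v))`, it
reads `h(Y) - log (π e) = I(U; Y) + γ log (1 + s v)`. For the counting measure on `Bool` it
identifies `H_b(γ) - H_NP(γ, P_FA, P_MD)` as the mutual information of the binary channel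
`U → g(Y)`, which is at most `I(U; Y)` by data processing.
-/

section Divergence

open InformationTheory
open scoped NNReal

variable {α : Type*} [MeasurableSpace α] {μ κ ν : Measure α}

lemma llr_ae_eq_llr_sub_llr [SigmaFinite μ] [SigmaFinite κ] [SigmaFinite ν]
    (hμκ : μ ≪ κ) (hκν : κ ≪ ν) : llr μ κ =ᵐ[μ] fun x => llr μ ν x - llr κ ν x := by
  filter_upwards [hμκ (Measure.rnDeriv_mul_rnDeriv' (μ := μ) hκν), Measure.rnDeriv_pos hμκ,
    hμκ (Measure.rnDeriv_lt_top μ κ), hμκ (Measure.rnDeriv_pos hκν),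
    hμκ (hκν (Measure.rnDeriv_lt_top κ ν))] with x hmul hpos hlt hpos' hlt'
  rw [llr, llr, llr, ← hmul, Pi.mul_apply, ENNReal.toReal_mul,
    log_mul (ENNReal.toReal_pos hpos.ne' hlt.ne).ne' (ENNReal.toReal_pos hpos'.ne' hlt'.ne).ne',
    add_sub_cancel_right]

lemma rnDeriv_ae_le_of_le_smul [SigmaFinite ν] {C : ℝ≥0} (h : μ ≤ C • ν) :
    ∀ᵐ x ∂ν, μ.rnDeriv ν x ≤ C := by
  refine ae_le_of_forall_setLIntegral_le_of_sigmaFinite (μ.measurable_rnDeriv ν) fun s _ _ => ?_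
  rw [setLIntegral_const]
  exact (Measure.setLIntegral_rnDeriv_le s).trans (h s)

lemma integrable_llr_of_le_smul [IsFiniteMeasure μ] [IsFiniteMeasure ν] {C : ℝ≥0}
    (h : μ ≤ C • ν) : Integrable (llr μ ν) μ := by
  have hμν : μ ≪ ν := Measure.absolutelyContinuous_of_le_smul (c := C) h
  obtain ⟨B, hB⟩ := (isCompact_Icc (a := (0 : ℝ)) (b := C)).exists_bound_of_continuousOn
    continuous_klFun.continuousOn
  rw [← integrable_klFun_rnDeriv_iff hμν]
  refine .of_bound
    (measurable_klFun.comp (μ.measurable_rnDeriv ν).ennreal_toReal).aestronglyMeasurable B ?_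
  filter_upwards [rnDeriv_ae_le_of_le_smul h] with x hx
  exact hB _ ⟨ENNReal.toReal_nonneg, ENNReal.toReal_mono ENNReal.coe_ne_top hx⟩

end Divergence

section Entropy

variable {α : Type*} [MeasurableSpace α]

/-- The entropy `-∫ log (dμ/dν) dμ` (in nats) of `μ` relative to a reference measure `ν`: the
differential entropy for the Lebesgue measure, the Shannon entropy for the counting measure. -/
noncomputable def entropyWrt (ν μ : Measure α) : ℝ := -∫ x, llr μ ν x ∂μ

section WithDensity

variable {ν : Measure α} [SigmaFinite ν] {f : α → ℝ}

lemma toReal_rnDeriv_withDensity_ofReal (hf : Measurable f) (hf0 : ∀ x, 0 ≤ f x) :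
    (fun x => ((ν.withDensity fun y => ENNReal.ofReal (f y)).rnDeriv ν x).toReal) =ᵐ[ν] f := by
  filter_upwards [Measure.rnDeriv_withDensity ν hf.ennreal_ofReal] with x hx
  rw [hx, ENNReal.toReal_ofReal (hf0 x)]

lemma entropyWrt_withDensity (hf : Measurable f) (hf0 : ∀ x, 0 ≤ f x) (hfi : Integrable f ν) :
    entropyWrt ν (ν.withDensity fun x => ENNReal.ofReal (f x)) = -∫ x, f x * log (f x) ∂ν := by
  have := isFiniteMeasure_withDensity_ofReal hfi.2
  rw [entropyWrt, ← integral_rnDeriv_mul_log (withDensity_absolutelyContinuous ν _)]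
  congr 1
  refine integral_congr_ae ?_
  filter_upwards [toReal_rnDeriv_withDensity_ofReal hf hf0] with x hx
  rw [hx]

lemma integrable_llr_withDensity_iff (hf : Measurable f) (hf0 : ∀ x, 0 ≤ f x)
    (hfi : Integrable f ν) :
    Integrable (llr (ν.withDensity fun x => ENNReal.ofReal (f x)) ν)
      (ν.withDensity fun x => ENNReal.ofReal (f x)) ↔ Integrable (fun x => f x * log (f x)) ν := by
  have := isFiniteMeasure_withDensity_ofReal hfi.2
  rw [← integrable_rnDeriv_mul_log_iff (withDensity_absolutelyContinuous ν _)]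
  refine integrable_congr ?_
  filter_upwards [toReal_rnDeriv_withDensity_ofReal hf hf0] with x hx
  rw [hx]

end WithDensity

lemma withDensity_count_ofReal_real_singleton [Countable α] [MeasurableSingletonClass α]
    (μ : Measure α) [IsFiniteMeasure μ] :
    Measure.count.withDensity (fun x => ENNReal.ofReal (μ.real {x})) = μ := by
  refine Measure.ext_of_singleton fun x => ?_
  simp [withDensity_apply _ (measurableSet_singleton x)]

lemma entropyWrt_count [Fintype α] [MeasurableSingletonClass α] (μ : Measure α)
    [IsFiniteMeasure μ] : entropyWrt .count μ = ∑ x, negMulLog (μ.real {x}) := by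
  conv_lhs => rw [← withDensity_count_ofReal_real_singleton μ]
  rw [entropyWrt_withDensity .of_discrete (fun _ => measureReal_nonneg) .of_finite,
    integral_fintype .of_finite]
  simp [negMulLog]

lemma measureReal_false (μ : Measure Bool) [IsProbabilityMeasure μ] :
    μ.real {false} = 1 - μ.real {true} := by
  rw [← probReal_compl_eq_one_sub (measurableSet_singleton true), Bool.compl_singleton,
    Bool.not_true]

lemma entropyWrt_count_bool (μ : Measure Bool) [IsProbabilityMeasure μ] :
    entropyWrt .count μ = binEntropy (μ.real {true}) := by
  rw [entropyWrt_count, Fintype.sum_bool, measureReal_false,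
    binEntropy_eq_negMulLog_add_negMulLog_one_sub]

end Entropy

section Mixture

open InformationTheory
open scoped NNReal ENNReal

variable {α β ι : Type*} [MeasurableSpace α] [MeasurableSpace β] [Fintype ι]

/-- The law of `Y` when `Y` is drawn from `P i` with probability `w i`. -/
noncomputable def mixture (w : ι → ℝ≥0) (P : ι → Measure α) : Measure α := ∑ i, w i • P i

/-- The mutual information (in nats) between `Y` and the label `i` of the component it is drawn from
in `mixture w P`, encoded as the average divergence of a component from the mixture. -/
noncomputable def mixtureInfo (w : ι → ℝ≥0) (P : ι → Measure α) : ℝ≥0∞ :=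
  ∑ i, w i * klDiv (P i) (mixture w P)

variable {w : ι → ℝ≥0} {P : ι → Measure α} {ν : Measure α}

instance isFiniteMeasure_mixture [∀ i, IsFiniteMeasure (P i)] :
    IsFiniteMeasure (mixture w P) := by
  unfold mixture
  infer_instance

lemma isProbabilityMeasure_mixture [∀ i, IsProbabilityMeasure (P i)] (hw : ∑ i, w i = 1) :
    IsProbabilityMeasure (mixture w P) := by
  refine ⟨?_⟩
  simp only [mixture, Measure.coe_finsetSum, Finset.sum_apply, Measure.smul_apply, measure_univ,
    ENNReal.smul_def, smul_eq_mul, mul_one]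
  exact_mod_cast hw

lemma mixture_map {g : α → β} (hg : Measurable g) :
    (mixture w P).map g = mixture w fun i => (P i).map g := by
  simp only [mixture, Measure.map_finset_sum hg.aemeasurable, Measure.map_smul]

lemma mixtureInfo_map_le [∀ i, IsFiniteMeasure (P i)] {g : α → β} (hg : Measurable g) :
    mixtureInfo w (fun i => (P i).map g) ≤ mixtureInfo w P := by
  simp only [mixtureInfo, ← mixture_map hg]
  gcongr
  exact klDiv_map_le _ _ hg

lemma le_smul_mixture {i : ι} (hi : w i ≠ 0) : P i ≤ (w i)⁻¹ • mixture w P := by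
  have h : w i • P i ≤ mixture w P :=
    Finset.single_le_sum (f := fun j => w j • P j) (fun _ _ => Measure.zero_le _)
      (Finset.mem_univ i)
  calc P i = (w i)⁻¹ • w i • P i := (inv_smul_smul₀ hi _).symm
    _ ≤ (w i)⁻¹ • mixture w P := by gcongr

lemma absolutelyContinuous_mixture {i : ι} (hi : w i ≠ 0) : P i ≪ mixture w P :=
  Measure.absolutelyContinuous_of_le_smul (c := ((w i)⁻¹ : ℝ≥0)) (le_smul_mixture hi)

lemma mixture_absolutelyContinuous (hP : ∀ i, P i ≪ ν) : mixture w P ≪ ν :=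
  fun s hs => by simp [mixture, hP _ hs]

lemma mixtureInfo_ne_top [∀ i, IsFiniteMeasure (P i)] : mixtureInfo w P ≠ ∞ := by
  refine ENNReal.sum_ne_top.2 fun i _ => ?_
  rcases eq_or_ne (w i) 0 with hi | hi
  · simp [hi]
  · exact ENNReal.mul_ne_top ENNReal.coe_ne_top (klDiv_ne_top (absolutelyContinuous_mixture hi)
      (integrable_llr_of_le_smul (le_smul_mixture hi)))

lemma integral_mixture {f : α → ℝ} (hf : ∀ i, w i ≠ 0 → Integrable f (P i)) :
    ∫ x, f x ∂mixture w P = ∑ i, w i * ∫ x, f x ∂P i := by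
  rw [mixture, integral_finsetSum_measure]
  · simp_rw [integral_smul_nnreal_measure, NNReal.smul_def, smul_eq_mul]
  · intro i _
    rcases eq_or_ne (w i) 0 with hi | hi
    · simp [hi]
    · exact (hf i hi).smul_measure_nnreal

lemma toReal_mixtureInfo [∀ i, IsProbabilityMeasure (P i)] (hw : ∑ i, w i = 1) :
    (mixtureInfo w P).toReal = ∑ i, w i * ∫ x, llr (P i) (mixture w P) x ∂P i := by
  have := isProbabilityMeasure_mixture (P := P) hw
  rw [mixtureInfo, ENNReal.toReal_sum (ENNReal.sum_ne_top.1 mixtureInfo_ne_top)]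
  refine Finset.sum_congr rfl fun i _ => ?_
  rcases eq_or_ne (w i) 0 with hi | hi
  · simp [hi]
  · rw [ENNReal.toReal_mul, ENNReal.coe_toReal,
      toReal_klDiv_of_measure_eq (absolutelyContinuous_mixture hi) (by simp)]

theorem toReal_mixtureInfo_eq_entropyWrt_sub [SigmaFinite ν] [∀ i, IsProbabilityMeasure (P i)]
    (hw : ∑ i, w i = 1) (hP : ∀ i, P i ≪ ν) (hint : ∀ i, Integrable (llr (P i) ν) (P i)) :
    (mixtureInfo w P).toReal = entropyWrt ν (mixture w P) - ∑ i, w i * entropyWrt ν (P i) := by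
  have hmix : mixture w P ≪ ν := mixture_absolutelyContinuous hP
  have hsplit {i : ι} (hi : w i ≠ 0) :
      llr (mixture w P) ν =ᵐ[P i] fun x => llr (P i) ν x - llr (P i) (mixture w P) x := by
    filter_upwards [llr_ae_eq_llr_sub_llr (absolutelyContinuous_mixture hi) hmix] with x hx
    rw [hx, sub_sub_cancel]
  have hint' {i : ι} (hi : w i ≠ 0) : Integrable (llr (P i) (mixture w P)) (P i) :=
    integrable_llr_of_le_smul (le_smul_mixture hi)
  rw [toReal_mixtureInfo hw, entropyWrt, integral_mixture fun i hi =>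
    ((hint i).sub (hint' hi)).congr (hsplit hi).symm, ← Finset.sum_neg_distrib,
    ← Finset.sum_sub_distrib]
  refine Finset.sum_congr rfl fun i _ => ?_
  rcases eq_or_ne (w i) 0 with hi | hi
  · simp [hi]
  · rw [integral_congr_ae (hsplit hi), integral_sub (hint i) (hint' hi), entropyWrt]
    ring

lemma mixture_withDensity_ofReal {f : ι → α → ℝ} (hf : ∀ i, Measurable (f i))
    (hf0 : ∀ i x, 0 ≤ f i x) :
    mixture w (fun i => ν.withDensity fun x => ENNReal.ofReal (f i x)) =
      ν.withDensity fun x => ENNReal.ofReal (∑ i, w i * f i x) := by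
  ext s hs
  have hsum (x : α) :
      ENNReal.ofReal (∑ i, w i * f i x) = ∑ i, (w i : ℝ≥0∞) * ENNReal.ofReal (f i x) := by
    rw [ENNReal.ofReal_sum_of_nonneg fun i _ => mul_nonneg (w i).coe_nonneg (hf0 i x)]
    simp_rw [ENNReal.ofReal_mul (w _).coe_nonneg, ENNReal.ofReal_coe_nnreal]
  simp_rw [mixture, Measure.coe_finsetSum, Finset.sum_apply, Measure.smul_apply,
    withDensity_apply _ hs, hsum]
  rw [lintegral_finsetSum _ fun i _ => (hf i).ennreal_ofReal.const_mul _]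
  simp_rw [lintegral_const_mul _ (hf _).ennreal_ofReal, ENNReal.smul_def, smul_eq_mul]

end Mixture

section BinaryChannel

open scoped NNReal

/-- The probabilities of the two labels of a Bernoulli variable with parameter `γ ∈ [0, 1]`, as
weights for `mixture`; outside `[0, 1]` negative values are truncated to `0`. -/
noncomputable def bernoulliWeight (γ : ℝ) (u : Bool) : ℝ≥0 :=
  bif u then γ.toNNReal else (1 - γ).toNNReal

variable {γ : ℝ}

lemma sum_bernoulliWeight_mul (hγ : γ ∈ Set.Icc 0 1) (x : Bool → ℝ) :
    ∑ u, bernoulliWeight γ u * x u = (1 - γ) * x false + γ * x true := by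
  simp only [bernoulliWeight, Fintype.sum_bool, cond_true, cond_false,
    coe_toNNReal _ hγ.1, coe_toNNReal _ (sub_nonneg.2 hγ.2), add_comm]

lemma sum_bernoulliWeight (hγ : γ ∈ Set.Icc 0 1) : ∑ u, bernoulliWeight γ u = 1 := by
  simpa [← NNReal.coe_inj] using sum_bernoulliWeight_mul hγ 1

lemma log_two_mul_binEnt (p : ℝ) : log 2 * binEnt p = binEntropy p := by
  have hlog : log 2 ≠ 0 := (log_pos one_lt_two).ne'
  rw [binEnt, binEntropy_eq_negMulLog_add_negMulLog_one_sub, negMulLog, negMulLog, logb, logb]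
  field_simp
  ring

lemma toReal_mixtureInfo_bernoulliWeight (hγ : γ ∈ Set.Icc 0 1) (Q : Bool → Measure Bool)
    [∀ u, IsProbabilityMeasure (Q u)] :
    (mixtureInfo (bernoulliWeight γ) Q).toReal =
      log 2 * (binEnt γ - HNP γ ((Q false).real {true}) ((Q true).real {false})) := by
  have hw := sum_bernoulliWeight hγ
  have := isProbabilityMeasure_mixture (P := Q) hw
  have hmix : (mixture (bernoulliWeight γ) Q).real {true} =
      (1 - γ) * (Q false).real {true} + γ * (Q true).real {true} := by
    simp only [← integral_indicator_one (measurableSet_singleton true)]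
    rw [integral_mixture fun _ _ => .of_finite, sum_bernoulliWeight_mul hγ]
  rw [toReal_mixtureInfo_eq_entropyWrt_sub (ν := .count) hw
    (fun u s hs => by simp [Measure.count_eq_zero_iff.1 hs]) fun _ => .of_finite,
    sum_bernoulliWeight_mul hγ]
  simp only [entropyWrt_count_bool, hmix, HNP, measureReal_false, mul_sub, mul_add,
    mul_left_comm (log 2), log_two_mul_binEnt, binEntropy_one_sub, sub_sub_cancel]
  ring

theorem log_two_mul_binEnt_sub_HNP_le_toReal_mixtureInfo {α : Type*} [MeasurableSpace α]
    (hγ : γ ∈ Set.Icc 0 1) (P : Bool → Measure α) [∀ u, IsProbabilityMeasure (P u)] {g : α → Bool}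
    (hg : Measurable g) :
    log 2 * (binEnt γ - HNP γ ((P false).real {x | g x = true}) ((P true).real {x | g x = false})) ≤
      (mixtureInfo (bernoulliWeight γ) P).toReal := by
  have (u : Bool) : IsProbabilityMeasure ((P u).map g) :=
    Measure.isProbabilityMeasure_map hg.aemeasurable
  have hmap (u b : Bool) : (P u).real {x | g x = b} = ((P u).map g).real {b} :=
    (map_measureReal_apply hg (measurableSet_singleton b)).symm
  rw [hmap, hmap, ← toReal_mixtureInfo_bernoulliWeight hγ fun u => (P u).map g]
  exact ENNReal.toReal_mono mixtureInfo_ne_top (mixtureInfo_map_le hg)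

end BinaryChannel

section ComplexGaussian

open scoped NNReal

/-- The density of the circularly symmetric complex Gaussian with mean `m` and variance `w`. -/
noncomputable def complexGaussianPDF (m : ℂ) (w : ℝ) (y : ℂ) : ℝ :=
  1 / (π * w) * exp (-‖y - m‖ ^ 2 / w)

/-- The circularly symmetric complex Gaussian law `CN(m, w)`. -/
noncomputable def complexGaussian (m : ℂ) (w : ℝ) : Measure ℂ :=
  volume.withDensity fun y => ENNReal.ofReal (complexGaussianPDF m w y)

variable (m : ℂ) {w : ℝ}

@[fun_prop]
lemma measurable_complexGaussianPDF (w : ℝ) : Measurable (complexGaussianPDF m w) := by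
  unfold complexGaussianPDF
  fun_prop

lemma complexGaussianPDF_pos (hw : 0 < w) (y : ℂ) : 0 < complexGaussianPDF m w y := by
  unfold complexGaussianPDF
  positivity

lemma integral_norm_sub_rpow_mul_complexGaussianPDF (hw : 0 < w) {q : ℝ} (hq : -2 < q) :
    ∫ y, ‖y - m‖ ^ q * complexGaussianPDF m w y = w ^ (q / 2) * Gamma (q / 2 + 1) := by
  have hcenter (y : ℂ) : ‖y‖ ^ q * complexGaussianPDF 0 w y =
      1 / (π * w) * (‖y‖ ^ q * exp (-w⁻¹ * ‖y‖ ^ (2 : ℝ))) := by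
    rw [complexGaussianPDF, sub_zero, rpow_two, neg_div, div_eq_inv_mul (‖y‖ ^ 2), neg_mul]
    ring
  have hpow : w⁻¹ ^ (-(q + 2) / 2) = w ^ (q / 2) * w := by
    rw [inv_rpow hw.le, ← rpow_neg hw.le, ← rpow_add_one hw.ne']
    ring_nf
  have hshift := integral_sub_right_eq_self (μ := volume)
    (fun y => ‖y‖ ^ q * complexGaussianPDF 0 w y) m
  simp only [complexGaussianPDF, sub_zero] at hshift hcenter ⊢
  rw [hshift]
  simp_rw [hcenter]
  rw [integral_const_mul, Complex.integral_rpow_mul_exp_neg_mul_rpow one_le_two hq (inv_pos.2 hw),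
    hpow, add_div, div_self two_ne_zero]
  field_simp

lemma integral_complexGaussianPDF (hw : 0 < w) : ∫ y, complexGaussianPDF m w y = 1 := by
  simpa using integral_norm_sub_rpow_mul_complexGaussianPDF m hw (q := 0) (by norm_num)

lemma integral_norm_sub_sq_mul_complexGaussianPDF (hw : 0 < w) :
    ∫ y, ‖y - m‖ ^ 2 * complexGaussianPDF m w y = w := by
  have h := integral_norm_sub_rpow_mul_complexGaussianPDF m hw (q := 2) (by norm_num)
  simpa [one_add_one_eq_two] using h

lemma integrable_complexGaussianPDF (hw : 0 < w) : Integrable (complexGaussianPDF m w) :=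
  .of_integral_ne_zero (by rw [integral_complexGaussianPDF m hw]; exact one_ne_zero)

lemma integrable_norm_sub_sq_mul_complexGaussianPDF (hw : 0 < w) :
    Integrable fun y => ‖y - m‖ ^ 2 * complexGaussianPDF m w y :=
  .of_integral_ne_zero (by rw [integral_norm_sub_sq_mul_complexGaussianPDF m hw]; exact hw.ne')

lemma complexGaussianPDF_mul_log (hw : 0 < w) (y : ℂ) :
    complexGaussianPDF m w y * log (complexGaussianPDF m w y) =
      -log (π * w) * complexGaussianPDF m w y +
        -w⁻¹ * (‖y - m‖ ^ 2 * complexGaussianPDF m w y) := by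
  have h : log (complexGaussianPDF m w y) = -log (π * w) - w⁻¹ * ‖y - m‖ ^ 2 := by
    rw [complexGaussianPDF, log_mul (by positivity) (exp_pos _).ne', one_div, log_inv, log_exp]
    ring
  rw [h]
  ring

lemma integrable_complexGaussianPDF_mul_log (hw : 0 < w) :
    Integrable fun y => complexGaussianPDF m w y * log (complexGaussianPDF m w y) := by
  simp_rw [complexGaussianPDF_mul_log m hw]
  exact ((integrable_complexGaussianPDF m hw).const_mul _).add
    ((integrable_norm_sub_sq_mul_complexGaussianPDF m hw).const_mul _)

lemma integral_complexGaussianPDF_mul_log (hw : 0 < w) :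
    ∫ y, complexGaussianPDF m w y * log (complexGaussianPDF m w y) =
      -(log (π * exp 1) + log w) := by
  simp_rw [complexGaussianPDF_mul_log m hw]
  rw [integral_add ((integrable_complexGaussianPDF m hw).const_mul _)
    ((integrable_norm_sub_sq_mul_complexGaussianPDF m hw).const_mul _), integral_const_mul,
    integral_const_mul, integral_complexGaussianPDF m hw,
    integral_norm_sub_sq_mul_complexGaussianPDF m hw, log_mul pi_ne_zero hw.ne',
    log_mul pi_ne_zero (exp_pos 1).ne', log_exp, neg_mul w⁻¹,
    inv_mul_cancel₀ hw.ne']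
  ring

lemma isProbabilityMeasure_complexGaussian (hw : 0 < w) :
    IsProbabilityMeasure (complexGaussian m w) := by
  refine ⟨?_⟩
  rw [complexGaussian, withDensity_apply _ .univ, setLIntegral_univ,
    ← ofReal_integral_eq_lintegral_ofReal (integrable_complexGaussianPDF m hw)
      (.of_forall fun y => (complexGaussianPDF_pos m hw y).le),
    integral_complexGaussianPDF m hw, ENNReal.ofReal_one]

lemma complexGaussian_real_apply (hw : 0 < w) {s : Set ℂ} (hs : MeasurableSet s) :
    (complexGaussian m w).real s = ∫ y in s, complexGaussianPDF m w y := by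
  rw [measureReal_def, complexGaussian, withDensity_apply _ hs,
    integral_eq_lintegral_of_nonneg_ae (.of_forall fun y => (complexGaussianPDF_pos m hw y).le)
      (measurable_complexGaussianPDF m w).aestronglyMeasurable]

lemma complexGaussian_absolutelyContinuous (w : ℝ) : complexGaussian m w ≪ volume :=
  withDensity_absolutelyContinuous _ _

lemma integrable_llr_complexGaussian (hw : 0 < w) :
    Integrable (llr (complexGaussian m w) volume) (complexGaussian m w) :=
  (integrable_llr_withDensity_iff (measurable_complexGaussianPDF m w)
    (fun y => (complexGaussianPDF_pos m hw y).le) (integrable_complexGaussianPDF m hw)).2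
    (integrable_complexGaussianPDF_mul_log m hw)

lemma entropyWrt_complexGaussian (hw : 0 < w) :
    entropyWrt volume (complexGaussian m w) = log (π * exp 1) + log w := by
  rw [complexGaussian, entropyWrt_withDensity (measurable_complexGaussianPDF m w)
    (fun y => (complexGaussianPDF_pos m hw y).le) (integrable_complexGaussianPDF m hw),
    integral_complexGaussianPDF_mul_log m hw, neg_neg]

theorem toReal_mixtureInfo_complexGaussian {ι : Type*} [Fintype ι] {p : ι → ℝ≥0}
    (hp : ∑ i, p i = 1) (m : ι → ℂ) {w : ι → ℝ} (hw : ∀ i, 0 < w i) :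
    (mixtureInfo p fun i => complexGaussian (m i) (w i)).toReal =
      (-∫ y, (∑ i, p i * complexGaussianPDF (m i) (w i) y) *
        log (∑ i, p i * complexGaussianPDF (m i) (w i) y)) -
      ∑ i, p i * (log (π * exp 1) + log (w i)) := by
  have hpos (i : ι) (y : ℂ) := (complexGaussianPDF_pos (m i) (hw i) y).le
  have hprob (i : ι) := isProbabilityMeasure_complexGaussian (m i) (hw i)
  rw [toReal_mixtureInfo_eq_entropyWrt_sub hp
    (fun i => complexGaussian_absolutelyContinuous (m i) (w i))
    fun i => integrable_llr_complexGaussian (m i) (hw i)]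
  simp_rw [entropyWrt_complexGaussian _ (hw _)]
  simp only [complexGaussian]
  rw [mixture_withDensity_ofReal (fun _ => measurable_complexGaussianPDF _ _) hpos,
    entropyWrt_withDensity (by fun_prop)
      (fun y => Finset.sum_nonneg fun i _ => mul_nonneg (p i).coe_nonneg (hpos i y))
      (integrable_finsetSum _ fun i _ => (integrable_complexGaussianPDF _ (hw i)).const_mul _)]

end ComplexGaussian

/-- Lower bound on the sensing rate. With `X` Bernoulli-Gaussian `BG(μ, v, γ)` and
`Y = √s X + Z` (`Z ~ CN(0,1)`), the output density is the mixture
`f_Y = (1-γ)f₀ + γf₁` with `f₀(y) = (1/π)e^{-|y|²}` and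
`f₁(y) = (1/(π(sv+1)))e^{-|y-√s μ|²/(sv+1)}`; since `h(Y|X) = log₂(πe)`,
`I(X;Y) = -∫ f_Y log₂ f_Y - log₂(πe)`. For any measurable binary detector `g` with
false-alarm probability `P_FA = ∫_{g = 1} f₀` and misdetection probability
`P_MD = ∫_{g = 0} f₁`, we have
`I(X;Y) ≥ H_b(γ) - H_NP(γ, P_FA, P_MD) + γ log₂(1 + s v)`. -/
theorem sensing_rate_lower_bound (γ s v : ℝ) (μ : ℂ)
    (hγ0 : 0 < γ) (hγ1 : γ < 1) (hs : 0 < s) (hv : 0 ≤ v)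
    (f0 f1 fY : ℂ → ℝ)
    (hf0 : f0 = fun y => (1 / Real.pi) * Real.exp (-‖y‖ ^ 2))
    (hf1 : f1 = fun y => (1 / (Real.pi * (s * v + 1))) *
        Real.exp (-‖y - (Real.sqrt s : ℂ) * μ‖ ^ 2 / (s * v + 1)))
    (hfY : fY = fun y => (1 - γ) * f0 y + γ * f1 y)
    (hIntY : Integrable (fun y => fY y * Real.logb 2 (fY y)))
    (hInt0 : Integrable (fun y => f0 y * Real.logb 2 (f0 y / fY y)))
    (hInt1 : Integrable (fun y => f1 y * Real.logb 2 (f1 y / fY y)))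
    (g : ℂ → Bool) (hg : Measurable g) :
    (-∫ y : ℂ, fY y * Real.logb 2 (fY y)) - Real.logb 2 (Real.pi * Real.exp 1) ≥
      binEnt γ -
        HNP γ (∫ y in {y | g y = true}, f0 y) (∫ y in {y | g y = false}, f1 y) +
        γ * Real.logb 2 (1 + s * v) := by
  have hγ : γ ∈ Set.Icc 0 1 := ⟨hγ0.le, hγ1.le⟩
  let m (u : Bool) : ℂ := bif u then √s * μ else 0
  let w (u : Bool) : ℝ := bif u then 1 + s * v else 1
  have hw (u : Bool) : 0 < w u := by cases u <;> simp only [w, cond_true, cond_false] <;> positivity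
  have hprob (u : Bool) := isProbabilityMeasure_complexGaussian (m u) (hw u)
  have hset (b : Bool) : MeasurableSet {y | g y = b} := hg (measurableSet_singleton b)
  replace hf0 : f0 = complexGaussianPDF (m false) (w false) := by
    simp [hf0, funext_iff, complexGaussianPDF, m, w]
  replace hf1 : f1 = complexGaussianPDF (m true) (w true) := by
    simp [hf1, funext_iff, complexGaussianPDF, m, w, add_comm]
  have chain_rule := toReal_mixtureInfo_complexGaussian (sum_bernoulliWeight hγ) m hw
  have data_processing := log_two_mul_binEnt_sub_HNP_le_toReal_mixtureInfo hγ
    (fun u => complexGaussian (m u) (w u)) hg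
  simp only [sum_bernoulliWeight_mul hγ, ← hf0, ← hf1] at chain_rule
  simp only [chain_rule, complexGaussian_real_apply _ (hw _) (hset _), ← hf0, ← hf1]
    at data_processing
  simp only [w, cond_true, cond_false, log_one] at data_processing
  simp only [hfY, logb, mul_div_assoc', integral_div, ← neg_div, ← sub_div]
  rw [ge_iff_le, ← le_sub_iff_add_le, ← sub_div, le_div_iff₀' (log_pos one_lt_two)]
  linarith
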